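/- Fix integers 3 ≤ r ≤ k ≤ n, u(n) < n, and consider the Markov chain for the upper bound. Define the moment generating function f̄_t(λ_{k−r+1}, λ_{k−r+2}, …, λ_k) := E[ exp( λ_{k−r+1}·(Ē(t)+t)/(k−r+1) + Σ_{j=k−r+2}^{k} λ_j·C̄_j(t) ) ]. Then for every t with 0 ≤ t < N(0) and N(t) ≥ k, the exact recursion f̄_{t+1}(λ_{k−r+1}, λ_{k−r+2}, …, λ_k) = f̄_t(λ_{k−r+1}, λ'_{k−r+2}, …, λ'_k) holds, where λ'_j := λ_j + log( 1 − j/N(t) + (j/N(t))·e^{λ_{j−1}} ) for j = k−r+2, …, k. -/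

import Mathlib

open Filter Finset Asymptotics

noncomputable section

/-- Neighborhood `∂(a)` of constraint `a` in the bipartite graph given by `ω`. -/
def nbhd {n m k : ℕ} (ω : Fin m → (Fin k ↪ Fin n)) (a : Fin m) : Finset (Fin n) :=
  Finset.univ.image (ω a)

/-- `V` is a `d`-stopping set: every constraint meets `V` in `0` or at least `d` variables. -/
def IsStoppingSet {n m k : ℕ} (d : ℕ) (ω : Fin m → (Fin k ↪ Fin n))
    (V : Finset (Fin n)) : Prop :=
  ∀ a : Fin m, (nbhd ω a ∩ V).card = 0 ∨ d ≤ (nbhd ω a ∩ V).card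

/-- Probability of an event under the uniform random bipartite-graph ensemble:
each of the `m` constraints independently picks a uniformly random `k`-tuple of
distinct indices from `{1,…,n}` (an embedding `Fin k ↪ Fin n`). -/
def prG (n m k : ℕ) (P : (Fin m → (Fin k ↪ Fin n)) → Prop) : ℝ :=
  letI := Classical.decPred P
  ((Finset.univ.filter P).card : ℝ) / (Fintype.card (Fin m → (Fin k ↪ Fin n)) : ℝ)

/-- `u ∈ ω(1) ∩ o(n)`. -/
def UGood (u : ℕ → ℕ) : Prop :=
  Tendsto (fun n => (u n : ℝ)) atTop atTop ∧
    Tendsto (fun n => (u n : ℝ) / (n : ℝ)) atTop (nhds 0)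

/-- `μ_c(k,r) = binom(k,r)⁻¹ (r-2)^(r-2) / (r (r-1)^(r-1))`. -/
def muc (k r : ℕ) : ℝ :=
  ((k.choose r : ℝ))⁻¹ * (((r : ℝ) - 2) ^ (r - 2) / ((r : ℝ) * ((r : ℝ) - 1) ^ (r - 1)))

/-- `φ_{k,r}(μ,λ,τ) = μ (e^{(k-r+1)λ} - 1) binom(k,r-1) (1+τ)^{r-1} - λτ`. -/
def phiE (k r : ℕ) (μ lam τ : ℝ) : ℝ :=
  μ * (Real.exp (((k : ℝ) - (r : ℝ) + 1) * lam) - 1) * (k.choose (r - 1) : ℝ)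
      * (1 + τ) ^ (r - 1)
    - lam * τ

/-- Membership in the local marginal polytope LOCAL: each `B a` is a distribution on
`[q]^k`, each `b i` is a distribution on `[q]`, and the marginalization conditions hold. -/
def MemLOCAL {n m q k : ℕ} (nb : Fin m → (Fin k ↪ Fin n))
    (b : Fin n → Fin q → ℝ) (B : Fin m → (Fin k → Fin q) → ℝ) : Prop :=
  (∀ i x, 0 ≤ b i x) ∧ (∀ i, ∑ x, b i x = 1) ∧
  (∀ a z, 0 ≤ B a z) ∧ (∀ a, ∑ z, B a z = 1) ∧
  (∀ (a : Fin m) (j : Fin k) (x : Fin q),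
    b (nb a j) x = ∑ z : Fin k → Fin q, if z j = x then B a z else 0)

/-- A point of LOCAL is zero-optimal if each `B a` is supported on `f_a⁻¹(y_a)`. -/
def ZeroOptimal {m q k l : ℕ} (f : Fin m → (Fin k → Fin q) → (Fin l → Fin q))
    (y : Fin m → Fin l → Fin q) (B : Fin m → (Fin k → Fin q) → ℝ) : Prop :=
  ∀ a z, B a z ≠ 0 → f a z = y a

/-- Integral part of a point of LOCAL. -/
def integralPart {n q : ℕ} (b : Fin n → Fin q → ℝ) : Finset (Fin n) :=
  letI := Classical.decPred fun i : Fin n => ∃ x : Fin q, b i x = 1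
  Finset.univ.filter fun i : Fin n => ∃ x : Fin q, b i x = 1

/-- `f : [q]^k → [q]^l` is `w`-wise independent. -/
def WiseIndep (q k l w : ℕ) (f : (Fin k → Fin q) → (Fin l → Fin q)) : Prop :=
  ∀ T : Finset (Fin k), T.card ≤ w → ∀ xT : Fin k → Fin q, ∀ y : Fin l → Fin q,
    (Finset.univ.filter fun x : Fin k → Fin q =>
        (∀ i ∈ T, x i = xT i) ∧ f x = y).card
      = q ^ (k - T.card - l)

/-- Minimum Hamming distance of a code. -/
def minHammingDist {A : Type*} [DecidableEq A] {k : ℕ} (M : Finset (Fin k → A)) : ℕ :=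
  sInf {d | ∃ x ∈ M, ∃ y ∈ M, x ≠ y ∧ hammingDist x y = d}

/-- `M` is an MDS code of length `k` and dimension `r-1`. -/
def IsMDSCode (A : Type*) [Fintype A] [DecidableEq A] (k r : ℕ)
    (M : Finset (Fin k → A)) : Prop :=
  M.card = Fintype.card A ^ (r - 1) ∧ minHammingDist M = k - r + 2

/-- `f` has MDS inverse image of dimension `r-1`. -/
def HasMDSInv (q k r : ℕ) (f : (Fin k → Fin q) → (Fin (k - r + 1) → Fin q)) : Prop :=
  ∀ y : Fin (k - r + 1) → Fin q,
    IsMDSCode (Fin q) k r (Finset.univ.filter fun x => f x = y)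

instance {n m k : ℕ} (d : ℕ) (ω : Fin m → (Fin k ↪ Fin n)) :
    DecidablePred fun V : Finset (Fin n) => IsStoppingSet d ω V := fun V => by
  unfold IsStoppingSet; infer_instance
/-- The binomial point mass `binom(n,i) p^i (1-p)^(n-i)`. -/
def binomPMF (n : ℕ) (p : ℝ) (i : ℕ) : ℝ := (n.choose i : ℝ) * p ^ i * (1 - p) ^ (n - i)

/-- `C_j(0)`: the number of constraints whose neighborhood meets the unknown
variables `{u+1,…,n}` in exactly `j` variables. -/
def Cinit (n m k u : ℕ) (ω : Fin m → (Fin k ↪ Fin n)) (j : ℕ) : ℕ :=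
  (Finset.univ.filter fun a : Fin m =>
    ((nbhd ω a).filter fun i : Fin n => u ≤ (i : ℕ)).card = j).card

/-- Initial state of the peeling Markov chains: `E(0) = ∑_{j=1}^{k-r+1} j C_j(0)` and
`C_j(0)` for every `j`. -/
def initState (n m k r u : ℕ) (ω : Fin m → (Fin k ↪ Fin n)) : ℤ × (ℕ → ℕ) :=
  (∑ j ∈ Finset.Icc 1 (k - r + 1), (j : ℤ) * (Cinit n m k u ω j : ℤ),
   fun j => Cinit n m k u ω j)

/-- Extend a vector `R : Fin (r-1) → ℕ` (indexed by `j = k-r+2,…,k`) to all of `ℕ` by `0`. -/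
def Rext (k r : ℕ) (R : Fin (r - 1) → ℕ) (j : ℕ) : ℕ :=
  if h : k - r + 2 ≤ j ∧ j - (k - r + 2) < r - 1 then R ⟨j - (k - r + 2), h.2⟩ else 0

/-- One-step transition operator (at time `t`) of the Markov chain for the upper bound:
`(T_t g)(s) = E[g(next state) | state at time t = s]`, where independently
`R̄_j ~ Binom(C̄_j, j/N(t))` for `j = k-r+2,…,k`, `C̄_k` is unchanged,
`C̄_j ← C̄_j + R̄_{j+1}` for `j = k-r+2,…,k-1`, and `Ē ← Ē - 1 + (k-r+1) R̄_{k-r+2}`. -/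
def upperStep (k r n u t : ℕ) (g : ℤ × (ℕ → ℕ) → ℝ) (s : ℤ × (ℕ → ℕ)) : ℝ :=
  ∑' R : Fin (r - 1) → ℕ,
    (∏ i : Fin (r - 1),
      binomPMF (s.2 (k - r + 2 + (i : ℕ)))
        (((k - r + 2 + (i : ℕ) : ℕ) : ℝ) / ((n : ℝ) - (u : ℝ) - (t : ℝ))) (R i)) *
    g (s.1 - 1 + ((k - r + 1 : ℕ) : ℤ) * (Rext k r R (k - r + 2) : ℤ),
       fun j => if k - r + 2 ≤ j ∧ j < k then s.2 j + Rext k r R (j + 1) else s.2 j)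

/-- `upperIter k r n u s t g = T_s (T_{s+1} (⋯ (T_{s+t-1} g)))`, so that
`E[g(X_t)] = E[(upperIter k r n u 0 t g) (X_0)]` for the upper-bound chain. -/
def upperIter (k r n u : ℕ) : ℕ → ℕ → (ℤ × (ℕ → ℕ) → ℝ) → ℤ × (ℕ → ℕ) → ℝ
  | _, 0, g => g
  | s, t + 1, g => upperStep k r n u s (upperIter k r n u (s + 1) t g)

/-- `E[g(X̄(t))]` for the upper-bound Markov chain driven by the random ensemble. -/
def upperE (k r n u m t : ℕ) (g : ℤ × (ℕ → ℕ) → ℝ) : ℝ :=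
  (∑ ω : Fin m → (Fin k ↪ Fin n), upperIter k r n u 0 t g (initState n m k r u ω))
    / (Fintype.card (Fin m → (Fin k ↪ Fin n)) : ℝ)

/-- One-step transition operator (at time `t`) of the Markov chain for the lower bound:
independently `R̲_j ~ Binom(C̲_j, j/N(t))` for `j = k-r+2,…,k` and
`S̲ ~ Binom(E̲+t, 1/(N(t)-k+r))`; then `C̲_k ← C̲_k - R̲_k`,
`C̲_j ← C̲_j - R̲_j + R̲_{j+1}` for `j = k-r+2,…,k-1`, and
`E̲ ← E̲ - 1 - S̲ + (k-r+1) R̲_{k-r+2}`. -/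
def lowerStep (k r n u t : ℕ) (g : ℤ × (ℕ → ℕ) → ℝ) (s : ℤ × (ℕ → ℕ)) : ℝ :=
  ∑' RS : (Fin (r - 1) → ℕ) × ℕ,
    ((∏ i : Fin (r - 1),
        binomPMF (s.2 (k - r + 2 + (i : ℕ)))
          (((k - r + 2 + (i : ℕ) : ℕ) : ℝ) / ((n : ℝ) - (u : ℝ) - (t : ℝ))) (RS.1 i)) *
      binomPMF (s.1 + (t : ℤ)).toNat
        (1 / ((n : ℝ) - (u : ℝ) - (t : ℝ) - (k : ℝ) + (r : ℝ))) RS.2) *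
    g (s.1 - 1 - (RS.2 : ℤ) + ((k - r + 1 : ℕ) : ℤ) * (Rext k r RS.1 (k - r + 2) : ℤ),
       fun j => if k - r + 2 ≤ j ∧ j ≤ k
         then s.2 j - Rext k r RS.1 j + Rext k r RS.1 (j + 1) else s.2 j)

/-- `lowerIter k r n u s t g = T_s (T_{s+1} (⋯ (T_{s+t-1} g)))` for the lower-bound chain. -/
def lowerIter (k r n u : ℕ) : ℕ → ℕ → (ℤ × (ℕ → ℕ) → ℝ) → ℤ × (ℕ → ℕ) → ℝ
  | _, 0, g => g
  | s, t + 1, g => lowerStep k r n u s (lowerIter k r n u (s + 1) t g)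

/-- `E[g(X̲(t))]` for the lower-bound Markov chain driven by the random ensemble. -/
def lowerE (k r n u m t : ℕ) (g : ℤ × (ℕ → ℕ) → ℝ) : ℝ :=
  (∑ ω : Fin m → (Fin k ↪ Fin n), lowerIter k r n u 0 t g (initState n m k r u ω))
    / (Fintype.card (Fin m → (Fin k ↪ Fin n)) : ℝ)

/-!
Each binomial variable `R̄_j` enters the next state exactly once with the coefficient `λ_{j-1}`:
through `C̄_{j-1}` for `j > k-r+2`, and through `Ē` for `j = k-r+2`, where the factor `k-r+1` is
cancelled by the denominator. The deterministic `-1` in `Ē` is absorbed by `t ↦ t+1`. So one step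
adds `∑_j λ_{j-1} R̄_j` to the exponent, and averaging over independent binomials multiplies its
exponential by `∏_j (1 - p_j + p_j e^{λ_{j-1}})^{C̄_j}` with `p_j = j/N(t)`. The logarithm of this
product is linear in the `C̄_j`, so it amounts to replacing `λ` by `λ'`; as this holds in every
state, the recursion already holds conditionally on the initial state.
-/

section Sums

lemma add_sum_Icc_succ {M : Type*} [AddCommMonoid M] (f : ℕ → M) {a b : ℕ} (hab : a ≤ b + 1) :
    f a + ∑ j ∈ Icc a b, f (j + 1) = ∑ j ∈ Icc a b, f j + f (b + 1) := by
  rw [← sum_Icc_succ_top hab, ← Ico_add_one_right_eq_Icc, ← Ico_add_one_right_eq_Icc,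
    sum_Ico_add' f, ← sum_eq_sum_Ico_succ_bot (by lia)]

lemma sum_Icc_eq_sum_fin {M : Type*} [AddCommMonoid M] (f : ℕ → M) {a b l : ℕ}
    (h : a + l = b + 1) : ∑ j ∈ Icc a b, f j = ∑ i : Fin l, f (a + i) := by
  rw [Fin.sum_univ_eq_sum_range (fun i => f (a + i)), ← Ico_add_one_right_eq_Icc,
    sum_Ico_eq_sum_range, ← h, Nat.add_sub_cancel_left]

lemma tsum_pi_prod_eq_prod_tsum {ι R : Type*} {κ : ι → Type*} [Fintype ι] [CommSemiring R]
    [TopologicalSpace R] (F : ∀ i, κ i → R) (hF : ∀ i, (F i).HasFiniteSupport) :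
    ∑' x : ∀ i, κ i, ∏ i, F i (x i) = ∏ i, ∑' y, F i y := by
  classical
  have hsupp i : Function.support (F i) ⊆ (hF i).toFinset := (hF i).coe_toFinset.ge
  simp only [tsum_eq_sum' (hsupp _), prod_univ_sum]
  refine tsum_eq_sum fun x hx => ?_
  obtain ⟨i, hi⟩ : ∃ i, F i (x i) = 0 := by
    by_contra! hne
    exact hx (Fintype.mem_piFinset.mpr fun i => hsupp i (hne i))
  exact prod_eq_zero (mem_univ i) hi

end Sums

section Binomial

lemma binomPMF_eq_zero_of_lt {c i : ℕ} (h : c < i) (p : ℝ) : binomPMF c p i = 0 := by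
  simp [binomPMF, Nat.choose_eq_zero_of_lt h]

lemma hasFiniteSupport_binomPMF_mul (c : ℕ) (p : ℝ) (f : ℕ → ℝ) :
    (fun i => binomPMF c p i * f i).HasFiniteSupport := by
  refine (Set.finite_Iic c).subset fun i hi => ?_
  by_contra hci
  exact hi (by simp only [binomPMF_eq_zero_of_lt (not_le.mp hci), zero_mul])

lemma tsum_binomPMF_mul_pow (c : ℕ) (p x : ℝ) :
    ∑' i, binomPMF c p i * x ^ i = (1 - p + p * x) ^ c := by
  rw [tsum_eq_sum (s := range (c + 1)), add_comm (1 - p), add_pow]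
  · refine sum_congr rfl fun i _ => ?_
    rw [binomPMF, mul_pow]
    ring
  · intro i hi
    rw [binomPMF_eq_zero_of_lt (not_lt.mp (mem_range.not.mp hi)), zero_mul]

lemma one_sub_add_mul_exp_pos {p : ℝ} (hp₀ : 0 ≤ p) (hp₁ : p ≤ 1) (x : ℝ) :
    0 < 1 - p + p * Real.exp x := by
  rcases hp₀.eq_or_lt with rfl | hp
  · simp
  · have := mul_pos hp (Real.exp_pos x)
    linarith

lemma tsum_prod_binomPMF_mul_exp_sum {ι : Type*} [Fintype ι] (c : ι → ℕ) {p : ι → ℝ}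
    (hp₀ : ∀ i, 0 ≤ p i) (hp₁ : ∀ i, p i ≤ 1) (θ : ι → ℝ) :
    ∑' R : ι → ℕ, (∏ i, binomPMF (c i) (p i) (R i)) * Real.exp (∑ i, θ i * R i)
      = Real.exp (∑ i, c i * Real.log (1 - p i + p i * Real.exp (θ i))) := by
  calc ∑' R : ι → ℕ, (∏ i, binomPMF (c i) (p i) (R i)) * Real.exp (∑ i, θ i * R i)
      = ∑' R : ι → ℕ, ∏ i, binomPMF (c i) (p i) (R i) * Real.exp (θ i) ^ R i := by
        simp only [Real.exp_sum, mul_comm (θ _), Real.exp_nat_mul, prod_mul_distrib]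
    _ = ∏ i, (1 - p i + p i * Real.exp (θ i)) ^ c i := by
        rw [tsum_pi_prod_eq_prod_tsum
          (fun i x => binomPMF (c i) (p i) x * Real.exp (θ i) ^ x)
          fun i => hasFiniteSupport_binomPMF_mul _ _ _]
        simp only [tsum_binomPMF_mul_pow]
    _ = Real.exp (∑ i, c i * Real.log (1 - p i + p i * Real.exp (θ i))) := by
        simp only [Real.exp_sum, Real.exp_nat_mul,
          Real.exp_log (one_sub_add_mul_exp_pos (hp₀ _) (hp₁ _) _)]

end Binomial

section UpperChain

variable {k r : ℕ}

lemma Rext_add (R : Fin (r - 1) → ℕ) (i : Fin (r - 1)) : Rext k r R (k - r + 2 + i) = R i := by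
  simp [Rext]

lemma Rext_eq_zero_of_lt (hrk : r ≤ k) (R : Fin (r - 1) → ℕ) {j : ℕ} (hj : k < j) :
    Rext k r R j = 0 :=
  dif_neg (by lia)

/-- The state of the upper-bound chain that follows `s` when the binomial variables `R̄_j`,
`j = k-r+2,…,k`, take the values `R`. -/
def upperNext (k r : ℕ) (s : ℤ × (ℕ → ℕ)) (R : Fin (r - 1) → ℕ) : ℤ × (ℕ → ℕ) :=
  (s.1 - 1 + ((k - r + 1 : ℕ) : ℤ) * (Rext k r R (k - r + 2) : ℤ),
    fun j => if k - r + 2 ≤ j ∧ j < k then s.2 j + Rext k r R (j + 1) else s.2 j)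

/-- The exponent `λ_{k-r+1} (Ē + t)/(k-r+1) + ∑_{j=k-r+2}^k λ_j C̄_j` whose exponential has
expectation `f̄_t(λ)`. -/
def mgfExponent (k r : ℕ) (lam : ℕ → ℝ) (t : ℕ) (s : ℤ × (ℕ → ℕ)) : ℝ :=
  lam (k - r + 1) * ((s.1 : ℝ) + t) / ((k : ℝ) - r + 1)
    + ∑ j ∈ Icc (k - r + 2) k, lam j * (s.2 j : ℝ)

/-- The parameter `λ'` of the recursion, with `λ'_j = λ_j + log (1 - j/N + (j/N) e^{λ_{j-1}})`
for `j = k-r+2,…,k`; the other coordinates of `λ` are kept. -/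
def mgfParamStep (k r : ℕ) (N : ℝ) (lam : ℕ → ℝ) (j : ℕ) : ℝ :=
  if k - r + 2 ≤ j ∧ j ≤ k then
    lam j + Real.log (1 - (j : ℝ) / N + (j : ℝ) / N * Real.exp (lam (j - 1)))
  else lam j

lemma upperNext_snd (hrk : r ≤ k) (s : ℤ × (ℕ → ℕ)) (R : Fin (r - 1) → ℕ) {j : ℕ}
    (hj : k - r + 2 ≤ j) : (upperNext k r s R).2 j = s.2 j + Rext k r R (j + 1) := by
  by_cases hjk : j < k
  · simp [upperNext, hj, hjk]
  · simp [upperNext, hjk, Rext_eq_zero_of_lt hrk R (show k < j + 1 by lia)]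

lemma mul_Rext_add_sum_mul_Rext_succ (hr : 1 ≤ r) (hrk : r ≤ k) (lam : ℕ → ℝ)
    (R : Fin (r - 1) → ℕ) :
    lam (k - r + 1) * Rext k r R (k - r + 2)
        + ∑ j ∈ Icc (k - r + 2) k, lam j * (Rext k r R (j + 1) : ℝ)
      = ∑ i : Fin (r - 1), lam (k - r + 2 + i - 1) * R i := by
  let f (j : ℕ) : ℝ := lam (j - 1) * Rext k r R j
  calc f (k - r + 2) + ∑ j ∈ Icc (k - r + 2) k, f (j + 1)
      = ∑ j ∈ Icc (k - r + 2) k, f j + f (k + 1) := add_sum_Icc_succ f (by lia)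
    _ = ∑ j ∈ Icc (k - r + 2) k, f j := by
        simp only [f, Rext_eq_zero_of_lt hrk R k.lt_add_one, Nat.cast_zero, mul_zero, add_zero]
    _ = ∑ i : Fin (r - 1), f (k - r + 2 + i) := sum_Icc_eq_sum_fin f (by lia)
    _ = ∑ i : Fin (r - 1), lam (k - r + 2 + i - 1) * R i := by simp only [f, Rext_add]

lemma mgfExponent_upperNext (hr : 1 ≤ r) (hrk : r ≤ k) (lam : ℕ → ℝ) (t : ℕ)
    (s : ℤ × (ℕ → ℕ)) (R : Fin (r - 1) → ℕ) :
    mgfExponent k r lam (t + 1) (upperNext k r s R)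
      = mgfExponent k r lam t s + ∑ i : Fin (r - 1), lam (k - r + 2 + i - 1) * R i := by
  have hcast : ((k - r + 1 : ℕ) : ℝ) = (k : ℝ) - r + 1 := by
    rw [Nat.cast_add_one, Nat.cast_sub hrk]
  have hne : (k : ℝ) - r + 1 ≠ 0 := hcast ▸ by positivity
  have fst_part : lam (k - r + 1) * (((upperNext k r s R).1 : ℝ) + (t + 1 : ℕ))
        / ((k : ℝ) - r + 1)
      = lam (k - r + 1) * ((s.1 : ℝ) + t) / ((k : ℝ) - r + 1)
        + lam (k - r + 1) * Rext k r R (k - r + 2) := by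
    simp only [upperNext, Int.cast_add, Int.cast_sub, Int.cast_mul, Int.cast_natCast, hcast]
    push_cast
    field_simp
    ring
  have snd_part : ∑ j ∈ Icc (k - r + 2) k, lam j * ((upperNext k r s R).2 j : ℝ)
      = ∑ j ∈ Icc (k - r + 2) k, lam j * (s.2 j : ℝ)
        + ∑ j ∈ Icc (k - r + 2) k, lam j * (Rext k r R (j + 1) : ℝ) := by
    rw [← sum_add_distrib]
    refine sum_congr rfl fun j hj => ?_
    rw [upperNext_snd hrk s R (mem_Icc.mp hj).1, Nat.cast_add, mul_add]
  rw [mgfExponent, mgfExponent, fst_part, snd_part,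
    ← mul_Rext_add_sum_mul_Rext_succ hr hrk]
  ring

lemma mgfExponent_mgfParamStep (hr : 1 ≤ r) (hrk : r ≤ k) (N : ℝ) (lam : ℕ → ℝ) (t : ℕ)
    (s : ℤ × (ℕ → ℕ)) :
    mgfExponent k r (mgfParamStep k r N lam) t s = mgfExponent k r lam t s
      + ∑ i : Fin (r - 1), s.2 (k - r + 2 + i) *
          Real.log (1 - ((k - r + 2 + i : ℕ) : ℝ) / N
            + ((k - r + 2 + i : ℕ) : ℝ) / N * Real.exp (lam (k - r + 2 + i - 1))) := by
  have hfst : mgfParamStep k r N lam (k - r + 1) = lam (k - r + 1) := if_neg (by lia)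
  rw [mgfExponent, mgfExponent, hfst, add_assoc,
    ← sum_Icc_eq_sum_fin (fun j => s.2 j * Real.log (1 - (j : ℝ) / N
      + (j : ℝ) / N * Real.exp (lam (j - 1)))) (show k - r + 2 + (r - 1) = k + 1 by lia),
    ← sum_add_distrib]
  congr 1
  refine sum_congr rfl fun j hj => ?_
  rw [mgfParamStep, if_pos (mem_Icc.mp hj)]
  ring

lemma upperStep_exp_mgfExponent {n u t : ℕ} (hr : 1 ≤ r) (hrk : r ≤ k)
    (hN : (k : ℝ) ≤ (n : ℝ) - u - t) (lam : ℕ → ℝ) (s : ℤ × (ℕ → ℕ)) :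
    upperStep k r n u t (fun x => Real.exp (mgfExponent k r lam (t + 1) x)) s
      = Real.exp (mgfExponent k r (mgfParamStep k r ((n : ℝ) - u - t) lam) t s) := by
  set N : ℝ := (n : ℝ) - u - t
  let p (i : Fin (r - 1)) : ℝ := ((k - r + 2 + i : ℕ) : ℝ) / N
  have hN₀ : 0 ≤ N := k.cast_nonneg.trans hN
  have hp₀ i : 0 ≤ p i := div_nonneg (Nat.cast_nonneg _) hN₀
  have hp₁ i : p i ≤ 1 := by
    have hle : k - r + 2 + (i : ℕ) ≤ k := by lia
    exact div_le_one_of_le₀ ((Nat.cast_le.mpr hle).trans hN) hN₀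
  calc upperStep k r n u t (fun x => Real.exp (mgfExponent k r lam (t + 1) x)) s
      = ∑' R : Fin (r - 1) → ℕ, (∏ i : Fin (r - 1), binomPMF (s.2 (k - r + 2 + i)) (p i) (R i)) *
          Real.exp (mgfExponent k r lam (t + 1) (upperNext k r s R)) := rfl
    _ = ∑' R : Fin (r - 1) → ℕ, Real.exp (mgfExponent k r lam t s) *
          ((∏ i : Fin (r - 1), binomPMF (s.2 (k - r + 2 + i)) (p i) (R i)) *
            Real.exp (∑ i : Fin (r - 1), lam (k - r + 2 + i - 1) * R i)) := by
        refine tsum_congr fun R => ?_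
        rw [mgfExponent_upperNext hr hrk, Real.exp_add, mul_left_comm]
    _ = Real.exp (mgfExponent k r (mgfParamStep k r N lam) t s) := by
        rw [tsum_mul_left, tsum_prod_binomPMF_mul_exp_sum _ hp₀ hp₁, ← Real.exp_add,
          mgfExponent_mgfParamStep hr hrk]

lemma upperIter_succ (k r n u s t : ℕ) (g : ℤ × (ℕ → ℕ) → ℝ) :
    upperIter k r n u s (t + 1) g = upperIter k r n u s t (upperStep k r n u (s + t) g) := by
  induction t generalizing s with
  | zero => rfl
  | succ t ih => rw [upperIter, ih, upperIter, Nat.add_right_comm, Nat.add_assoc]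

theorem stmt16_general {n u t : ℕ} (hr : 1 ≤ r) (hrk : r ≤ k) (hNt : k ≤ n - u - t)
    (lam : ℕ → ℝ) (s : ℤ × (ℕ → ℕ)) :
    upperIter k r n u 0 (t + 1) (fun x => Real.exp (mgfExponent k r lam (t + 1) x)) s
      = upperIter k r n u 0 t
          (fun x => Real.exp
            (mgfExponent k r (mgfParamStep k r ((n : ℝ) - u - t) lam) t x)) s := by
  have hN : (k : ℝ) ≤ (n : ℝ) - u - t := by
    have : ((k + u + t : ℕ) : ℝ) ≤ n := Nat.cast_le.mpr (by lia)
    push_cast at this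
    linarith
  rw [upperIter_succ, Nat.zero_add]
  exact congrArg (upperIter k r n u 0 t · s) (funext (upperStep_exp_mgfExponent hr hrk hN lam))

end UpperChain

/-- exact one-step recursion for the moment generating function
`f̄_t(λ_{k-r+1},…,λ_k) = E[exp(λ_{k-r+1}(Ē(t)+t)/(k-r+1) + ∑_{j=k-r+2}^k λ_j C̄_j(t))]`
of the upper-bound Markov chain:
`f̄_{t+1}(λ) = f̄_t(λ')` with `λ'_j = λ_j + log(1 - j/N(t) + (j/N(t)) e^{λ_{j-1}})`. -/
theorem stmt16 (k r n u m t : ℕ) (hr : 3 ≤ r) (hrk : r ≤ k) (hun : u < n)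
    (ht : t < n - u) (hNt : k ≤ n - u - t)
    (lam : ℕ → ℝ) :
    let g : (ℕ → ℝ) → ℕ → ℤ × (ℕ → ℕ) → ℝ := fun lv tt st =>
      Real.exp (lv (k - r + 1) * ((st.1 : ℝ) + (tt : ℝ)) / ((k : ℝ) - r + 1)
        + ∑ j ∈ Finset.Icc (k - r + 2) k, lv j * (st.2 j : ℝ))
    let lam' : ℕ → ℝ := fun j =>
      if k - r + 2 ≤ j ∧ j ≤ k then
        lam j + Real.log (1 - (j : ℝ) / ((n : ℝ) - u - t)
          + (j : ℝ) / ((n : ℝ) - u - t) * Real.exp (lam (j - 1)))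
      else lam j
    upperE k r n u m (t + 1) (g lam (t + 1)) = upperE k r n u m t (g lam' t) := by
  exact congrArg (· / _) (sum_congr rfl fun ω _ =>
    stmt16_general (by lia) hrk hNt lam (initState n m k r u ω))
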